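/- arXiv:2312.15788 — 2 statements merged into one kernel-verified Lean document; each statement's English description precedes it below -/
import Mathlib

section
/- Let (Ω, ℱ, P) be a probability space with a filtration (ℱ_l)_{l∈ℕ}, and let (Z_l)_{l∈ℕ} be a sequence of nonnegative integrable real random variables adapted to the filtration. Let δ, ε ∈ (0,1) and ζ, M ≥ 0, and suppose the drift condition holds: for every l ≥ 1, E[Z_l ∣ ℱ_{l−1}] ≤ (1−δ)(1−ε)·Z_{l−1} + (1−δ)·ζ + δ·M almost surely. Then the sequence E[min_{k≤l} Z_k] is nonincreasing in l and its limit as l → ∞ is at most (1/ε)·(ζ + δM/(1−δ)). -/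
open MeasureTheory Filter

/-- Running minimum `min_{k ≤ l} Z k ω`. -/
noncomputable def runMin {Ω : Type*} (Z : ℕ → Ω → ℝ) (l : ℕ) (ω : Ω) : ℝ :=
  (Finset.range (l + 1)).inf' (Finset.nonempty_range_iff.mpr (Nat.succ_ne_zero l))
    (fun k => Z k ω)

/-!
Taking expectations in the drift condition, the means `u l = E[Z_l]` satisfy
`u (l + 1) ≤ (1 - δ) (1 - ε) u l + (1 - δ) ζ + δ M`. Since the right-hand side is continuous in
`u l`, the infimum `I` of the means satisfies the same inequality with `I` on both sides; as
`I ≥ 0`, this gives `ε (1 - δ) I ≤ (1 - δ) ζ + δ M`. The limit of `E[min_{k ≤ l} Z_k]` is at most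
`I`, because each running minimum is at most the last term it involves.
-/

section RunMin

variable {Ω : Type*} {Z : ℕ → Ω → ℝ}

lemma runMin_eq_inf' (l : ℕ) :
    runMin Z l = (Finset.range (l + 1)).inf' Finset.nonempty_range_add_one Z := by
  ext ω
  exact (Finset.inf'_apply _ _ _).symm

lemma le_runMin_iff {l : ℕ} {ω : Ω} {c : ℝ} : c ≤ runMin Z l ω ↔ ∀ k ≤ l, c ≤ Z k ω := by
  simp [runMin]

lemma runMin_le {k l : ℕ} (hkl : k ≤ l) (ω : Ω) : runMin Z l ω ≤ Z k ω :=
  le_runMin_iff.1 le_rfl k hkl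

lemma antitone_runMin : Antitone (runMin Z) := fun _ _ hlm _ =>
  le_runMin_iff.2 fun _ hk => runMin_le (hk.trans hlm) _

variable [MeasurableSpace Ω] {μ : Measure Ω}

lemma integrable_runMin {l : ℕ} (hint : ∀ k ≤ l, Integrable (Z k) μ) :
    Integrable (runMin Z l) μ := by
  rw [runMin_eq_inf']
  exact Finset.inf'_induction (p := (Integrable · μ)) _ _ (fun _ hf _ hg => hf.inf hg)
    fun k hk => hint k (Finset.mem_range_succ_iff.1 hk)

lemma ae_le_runMin {g : Ω → ℝ} {l : ℕ} (h : ∀ k ≤ l, g ≤ᵐ[μ] Z k) : g ≤ᵐ[μ] runMin Z l := by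
  have hall : ∀ᵐ ω ∂μ, ∀ k ≤ l, g ω ≤ Z k ω :=
    (ae_ball_iff (Set.to_countable (Set.Iic l))).2 h
  filter_upwards [hall] with ω hω using le_runMin_iff.2 hω

lemma antitone_integral_runMin (hint : ∀ l, Integrable (Z l) μ) :
    Antitone fun l => ∫ ω, runMin Z l ω ∂μ := fun _ _ hlm =>
  integral_mono (integrable_runMin fun k _ => hint k) (integrable_runMin fun k _ => hint k)
    (antitone_runMin hlm)

lemma integral_runMin_le {k l : ℕ} (hkl : k ≤ l) (hint : ∀ j ≤ l, Integrable (Z j) μ) :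
    ∫ ω, runMin Z l ω ∂μ ≤ ∫ ω, Z k ω ∂μ :=
  integral_mono (integrable_runMin hint) (hint k hkl) (runMin_le hkl)

end RunMin

lemma bddBelow_range_integral_of_nonneg_ae {ι Ω : Type*} [MeasurableSpace Ω] {μ : Measure Ω}
    {f : ι → Ω → ℝ} (hf : ∀ i, 0 ≤ᵐ[μ] f i) : BddBelow (Set.range fun i => ∫ ω, f i ω ∂μ) :=
  ⟨0, Set.forall_mem_range.2 fun i => integral_nonneg_of_ae (hf i)⟩

lemma ciInf_le_apply_ciInf_of_succ_le {α : Type*} [ConditionallyCompleteLinearOrder α]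
    [TopologicalSpace α] [OrderTopology α] {u : ℕ → α} {f : α → α} (hf : Continuous f)
    (hu : BddBelow (Set.range u)) (hsucc : ∀ n, u (n + 1) ≤ f (u n)) :
    ⨅ n, u n ≤ f (⨅ n, u n) := by
  have hrange : Set.range u ⊆ {x | ⨅ n, u n ≤ f x} :=
    Set.range_subset_iff.2 fun n => (ciInf_le hu (n + 1)).trans (hsucc n)
  exact closure_minimal hrange (isClosed_le continuous_const hf)
    (csInf_mem_closure (Set.range_nonempty u) hu)

lemma le_of_le_drift {δ ε ζ M x : ℝ} (hδ : δ ∈ Set.Ico (0 : ℝ) 1) (hε : 0 < ε)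
    (hx : 0 ≤ x) (h : x ≤ (1 - δ) * (1 - ε) * x + ((1 - δ) * ζ + δ * M)) :
    x ≤ (1 / ε) * (ζ + δ * M / (1 - δ)) := by
  have hδ' : 0 < 1 - δ := sub_pos.2 hδ.2
  have hbound : (ε * (1 - δ)) * x ≤ (1 - δ) * ζ + δ * M := by
    linarith [mul_nonneg hδ.1 hx]
  calc x ≤ ((1 - δ) * ζ + δ * M) / (ε * (1 - δ)) := (le_div_iff₀' (by positivity)).2 hbound
    _ = (1 / ε) * (ζ + δ * M / (1 - δ)) := by field_simp

lemma integral_le_mul_integral_add_of_condExp_le {Ω : Type*} {m m0 : MeasurableSpace Ω}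
    {μ : Measure Ω} [IsProbabilityMeasure μ] (hm : m ≤ m0) {f g : Ω → ℝ} {a b : ℝ}
    (hg : Integrable g μ) (h : μ[f | m] ≤ᵐ[μ] fun ω => a * g ω + b) :
    ∫ ω, f ω ∂μ ≤ a * ∫ ω, g ω ∂μ + b :=
  calc ∫ ω, f ω ∂μ = ∫ ω, (μ[f | m]) ω ∂μ := (integral_condExp hm).symm
    _ ≤ ∫ ω, (a * g ω + b) ∂μ :=
      integral_mono_ae integrable_condExp ((hg.const_mul a).add (integrable_const b)) h
    _ = a * ∫ ω, g ω ∂μ + b := by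
      simp [integral_add (hg.const_mul a) (integrable_const b), integral_const_mul]

theorem expected_running_min_tendsto_le_general
    {Ω : Type*} {m0 : MeasurableSpace Ω} {μ : Measure Ω} [IsProbabilityMeasure μ]
    {m : ℕ → MeasurableSpace Ω} (hm : ∀ l, m l ≤ m0) {Z : ℕ → Ω → ℝ}
    (hint : ∀ l, Integrable (Z l) μ) (hnonneg : ∀ l, 0 ≤ᵐ[μ] Z l)
    {δ ε ζ M : ℝ} (hδ : δ ∈ Set.Ico (0 : ℝ) 1) (hε : 0 < ε)
    (hdrift : ∀ l, μ[Z (l + 1) | m l] ≤ᵐ[μ]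
      fun ω => (1 - δ) * (1 - ε) * Z l ω + (1 - δ) * ζ + δ * M) :
    Antitone (fun l => ∫ ω, runMin Z l ω ∂μ) ∧
      ∃ A : ℝ, Tendsto (fun l => ∫ ω, runMin Z l ω ∂μ) atTop (nhds A) ∧
        A ≤ (1 / ε) * (ζ + δ * M / (1 - δ)) := by
  have hanti := antitone_integral_runMin hint
  have hbdd := bddBelow_range_integral_of_nonneg_ae fun l =>
    ae_le_runMin (l := l) fun k _ => hnonneg k
  have hmean (l : ℕ) : ∫ ω, Z (l + 1) ω ∂μ ≤
      (1 - δ) * (1 - ε) * ∫ ω, Z l ω ∂μ + ((1 - δ) * ζ + δ * M) :=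
    integral_le_mul_integral_add_of_condExp_le (hm l) (hint l)
      (by simpa only [add_assoc] using hdrift l)
  have hfix := ciInf_le_apply_ciInf_of_succ_le
    (f := fun x => (1 - δ) * (1 - ε) * x + ((1 - δ) * ζ + δ * M)) (by fun_prop)
    (bddBelow_range_integral_of_nonneg_ae hnonneg) hmean
  refine ⟨hanti, _, tendsto_atTop_ciInf hanti hbdd, ?_⟩
  calc ⨅ l, ∫ ω, runMin Z l ω ∂μ ≤ ⨅ l, ∫ ω, Z l ω ∂μ :=
        ciInf_mono hbdd fun l => integral_runMin_le le_rfl fun k _ => hint k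
    _ ≤ (1 / ε) * (ζ + δ * M / (1 - δ)) :=
        le_of_le_drift hδ hε
          (le_ciInf fun l => integral_nonneg_of_ae (hnonneg l)) hfix

/-- If a nonnegative adapted integrable process satisfies the one-step drift condition
`E[Z_l ∣ ℱ_{l−1}] ≤ (1−δ)(1−ε) Z_{l−1} + (1−δ)ζ + δM` a.s., then `l ↦ E[min_{k≤l} Z_k]`
is nonincreasing and its limit is at most `(1/ε)(ζ + δM/(1−δ))`. -/
theorem expected_running_min_tendsto_le
    {Ω : Type*} {m0 : MeasurableSpace Ω} {μ : Measure Ω} [IsProbabilityMeasure μ]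
    (ℱ : Filtration ℕ m0) (Z : ℕ → Ω → ℝ)
    (hadapted : Adapted ℱ Z)
    (hint : ∀ l, Integrable (Z l) μ)
    (hnonneg : ∀ l ω, 0 ≤ Z l ω)
    (δ ε ζ M : ℝ) (hδ : δ ∈ Set.Ioo (0 : ℝ) 1) (hε : ε ∈ Set.Ioo (0 : ℝ) 1)
    (hζ : 0 ≤ ζ) (hM : 0 ≤ M)
    (hdrift : ∀ l : ℕ, 1 ≤ l →
      μ[Z l | ℱ (l - 1)] ≤ᵐ[μ]
        fun ω => (1 - δ) * (1 - ε) * Z (l - 1) ω + (1 - δ) * ζ + δ * M) :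
    Antitone (fun l => ∫ ω, runMin Z l ω ∂μ) ∧
      ∃ A : ℝ, Tendsto (fun l => ∫ ω, runMin Z l ω ∂μ) atTop (nhds A) ∧
        A ≤ (1 / ε) * (ζ + δ * M / (1 - δ)) := by
  exact expected_running_min_tendsto_le_general ℱ.le hint (fun l => .of_forall (hnonneg l))
    (Set.Ioo_subset_Ico_self hδ) hε.1 fun l => hdrift (l + 1) l.succ_pos
end

section
/- Let (Ω, ℱ, P) be a probability space with a filtration (ℱ_l)_{l∈ℕ}, and let (Z_l)_{l∈ℕ} be a sequence of nonnegative integrable real random variables adapted to the filtration. Let δ, ε ∈ (0,1) and ζ, M ≥ 0, and suppose the drift condition holds: for every l ≥ 1, E[Z_l ∣ ℱ_{l−1}] ≤ (1−δ)(1−ε)·Z_{l−1} + (1−δ)·ζ + δ·M almost surely. Then almost surely inf_{l∈ℕ} Z_l ≤ (1/ε)·(ζ + δM/(1−δ)); equivalently, the running minimum min_{k≤l} Z_k converges almost surely to a value at most (1/ε)·(ζ + δM/(1−δ)). -/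
open MeasureTheory Filter

/-!
Fix a level `η` above the fixed point of the affine drift. Wherever `Z n > η`, the drift contracts
`Z n` by a factor `ρ < 1` in conditional expectation. Killing the process as soon as it reaches
`η` only decreases it, so the integral of the killed process decays geometrically. As long as the
process survives it exceeds `η`, so by Markov's inequality survival forever has measure zero.
Restarting at any time `m` shows that `Z` returns to `(-∞, η]` infinitely often; then `η` is
lowered to the fixed point. With `a = (1 - δ)(1 - ε)` and `b = (1 - δ)ζ + δM`, the fixed point
`b / (1 - a)` is at most `b / ((1 - δ)ε)` because `1 - a = (1 - δ)ε + δ`.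
-/

theorem tendsto_runMin {Ω : Type*} {Z : ℕ → Ω → ℝ} {ω : Ω}
    (hbdd : BddBelow (Set.range fun l => Z l ω)) :
    Tendsto (fun l => runMin Z l ω) atTop (nhds (⨅ l, Z l ω)) := by
  have hrunMin_le {k l : ℕ} (hkl : k ≤ l) : runMin Z l ω ≤ Z k ω :=
    Finset.inf'_le _ (Finset.mem_range_succ_iff.2 hkl)
  have hle_runMin (l : ℕ) : ⨅ k, Z k ω ≤ runMin Z l ω :=
    Finset.le_inf' _ _ fun k _ => ciInf_le hbdd k
  have hbdd_runMin : BddBelow (Set.range fun l => runMin Z l ω) :=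
    ⟨_, Set.forall_mem_range.2 hle_runMin⟩
  have hanti : Antitone fun l => runMin Z l ω := fun _ _ hkl =>
    Finset.inf'_mono _ (Finset.range_mono (Nat.succ_le_succ hkl)) _
  have hiInf : ⨅ l, runMin Z l ω = ⨅ l, Z l ω :=
    le_antisymm (ciInf_mono hbdd_runMin fun _ => hrunMin_le le_rfl) (le_ciInf hle_runMin)
  exact hiInf ▸ tendsto_atTop_ciInf hanti hbdd_runMin

theorem tendsto_zero_of_succ_le_mul {u : ℕ → ℝ} {ρ : ℝ} {m : ℕ} (hρ : ρ < 1)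
    (hu : ∀ n, 0 ≤ u n) (hstep : ∀ n ≥ m, u (n + 1) ≤ ρ * u n) :
    Tendsto u atTop (nhds 0) := by
  refine (summable_of_ratio_norm_eventually_le hρ ?_).tendsto_atTop_zero
  filter_upwards [eventually_ge_atTop m] with n hn
  simpa only [Real.norm_of_nonneg (hu _)] using hstep n hn

theorem affine_le_mul_of_le {a b η z : ℝ} (hb : 0 ≤ b) (hη : 0 < η) (hz : η ≤ z) :
    a * z + b ≤ (a + b / η) * z := by
  have : b ≤ b / η * z := by
    rw [div_mul_eq_mul_div, le_div_iff₀ hη]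
    exact mul_le_mul_of_nonneg_left hz hb
  linarith

theorem affine_fixedPoint_le {δ ε ζ M : ℝ} (hδ : δ ∈ Set.Ico (0 : ℝ) 1) (hε : 0 < ε)
    (hb : 0 ≤ (1 - δ) * ζ + δ * M) :
    ((1 - δ) * ζ + δ * M) / (1 - (1 - δ) * (1 - ε)) ≤ 1 / ε * (ζ + δ * M / (1 - δ)) := by
  have hδ' : 0 < 1 - δ := sub_pos.2 hδ.2
  calc ((1 - δ) * ζ + δ * M) / (1 - (1 - δ) * (1 - ε))
      ≤ ((1 - δ) * ζ + δ * M) / ((1 - δ) * ε) := by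
        gcongr
        linarith [hδ.1]
    _ = 1 / ε * (ζ + δ * M / (1 - δ)) := by field_simp

section Integral

variable {Ω : Type*} {m0 : MeasurableSpace Ω} {μ : Measure Ω}

theorem ae_exists_lt_of_tendsto_integral_zero {ι : Type*} {l : Filter ι} [l.NeBot]
    {f : ι → Ω → ℝ} {c : ℝ} (hc : 0 < c) (hint : ∀ i, Integrable (f i) μ)
    (hnonneg : ∀ i, 0 ≤ᵐ[μ] f i) (hlim : Tendsto (fun i => ∫ ω, f i ω ∂μ) l (nhds 0)) :
    ∀ᵐ ω ∂μ, ∃ i, f i ω < c := by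
  set s : Set Ω := {ω | ∀ i, c ≤ f i ω}
  have hsub (i : ι) : s ⊆ {ω | c ≤ f i ω} := fun _ hω => hω i
  have hfin (i : ι) : μ {ω | c ≤ f i ω} ≠ ⊤ := ((hint i).measure_ge_lt_top hc).ne
  have hmarkov (i : ι) : c * μ.real s ≤ ∫ ω, f i ω ∂μ :=
    (mul_le_mul_of_nonneg_left (measureReal_mono (hsub i) (hfin i)) hc.le).trans
      (mul_meas_ge_le_integral_of_nonneg (hnonneg i) (hint i) c)
  have hreal : μ.real s = 0 :=
    le_antisymm (nonpos_of_mul_nonpos_right (ge_of_tendsto' hlim hmarkov) hc) measureReal_nonneg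
  obtain ⟨i⟩ := l.nonempty_of_neBot
  have hs : μ s = 0 :=
    (measureReal_eq_zero_iff (measure_ne_top_of_subset (hsub i) (hfin i))).1 hreal
  simpa only [ae_iff, not_exists, not_lt] using hs

theorem setIntegral_le_of_condExp_le {m : MeasurableSpace Ω} (hm : m ≤ m0)
    [SigmaFinite (μ.trim hm)] {f g : Ω → ℝ} {s : Set Ω} (hs : MeasurableSet[m] s)
    (hf : Integrable f μ) (hg : IntegrableOn g s μ)
    (hfg : ∀ᵐ ω ∂μ, ω ∈ s → (μ[f | m]) ω ≤ g ω) :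
    ∫ ω in s, f ω ∂μ ≤ ∫ ω in s, g ω ∂μ := by
  rw [← setIntegral_condExp hm hf hs]
  exact setIntegral_mono_on_ae integrable_condExp.integrableOn hg (hm s hs) hfg

end Integral

/-- The event that `Z` stays above the level `η` at all times from `m` to `n`, i.e. that the
process started at time `m` and killed on reaching `(-∞, η]` is still alive at time `n`.
It is the whole space when `n < m`. -/
def survivalSet {Ω : Type*} (Z : ℕ → Ω → ℝ) (η : ℝ) (m n : ℕ) : Set Ω :=
  {ω | ∀ k ∈ Set.Icc m n, η < Z k ω}

theorem survivalSet_succ_subset {Ω : Type*} (Z : ℕ → Ω → ℝ) (η : ℝ) (m n : ℕ) :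
    survivalSet Z η m (n + 1) ⊆ survivalSet Z η m n :=
  fun _ hω k hk => hω k ⟨hk.1, hk.2.trans n.le_succ⟩

section Drift

variable {Ω : Type*} {m0 : MeasurableSpace Ω} {μ : Measure Ω} {ℱ : Filtration ℕ m0}
  {Z : ℕ → Ω → ℝ}

theorem measurableSet_survivalSet (hadapted : Adapted ℱ Z) (η : ℝ) (m n : ℕ) :
    MeasurableSet[ℱ n] (survivalSet Z η m n) := by
  simp only [survivalSet, Set.ofPred_forall]
  exact MeasurableSet.biInter (Set.to_countable _) fun k hk =>
    measurableSet_lt measurable_const (hadapted.measurable_le hk.2)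

variable [SigmaFiniteFiltration μ ℱ]

theorem setIntegral_survivalSet_succ_le {η ρ : ℝ} {m n : ℕ} (hmn : m ≤ n)
    (hadapted : Adapted ℱ Z) (hint : ∀ l, Integrable (Z l) μ) (hnonneg : 0 ≤ᵐ[μ] Z (n + 1))
    (hdrift : ∀ᵐ ω ∂μ, η < Z n ω → (μ[Z (n + 1) | ℱ n]) ω ≤ ρ * Z n ω) :
    ∫ ω in survivalSet Z η m (n + 1), Z (n + 1) ω ∂μ ≤
      ρ * ∫ ω in survivalSet Z η m n, Z n ω ∂μ :=
  calc ∫ ω in survivalSet Z η m (n + 1), Z (n + 1) ω ∂μ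
      ≤ ∫ ω in survivalSet Z η m n, Z (n + 1) ω ∂μ :=
        setIntegral_mono_set (hint _).integrableOn (ae_restrict_of_ae hnonneg)
          (survivalSet_succ_subset Z η m n).eventuallyLE
    _ ≤ ∫ ω in survivalSet Z η m n, ρ * Z n ω ∂μ :=
        setIntegral_le_of_condExp_le (ℱ.le n) (measurableSet_survivalSet hadapted η m n)
          (hint _) ((hint n).const_mul ρ).integrableOn
          (hdrift.mono fun _ h hω => h (hω n ⟨hmn, le_rfl⟩))
    _ = ρ * ∫ ω in survivalSet Z η m n, Z n ω ∂μ := integral_const_mul _ _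

theorem ae_exists_ge_le_of_condExp_le_mul {η ρ : ℝ} (hη : 0 < η) (hρ : ρ < 1)
    (hadapted : Adapted ℱ Z) (hint : ∀ l, Integrable (Z l) μ) (hnonneg : ∀ l, 0 ≤ᵐ[μ] Z l)
    (hdrift : ∀ n, ∀ᵐ ω ∂μ, η < Z n ω → (μ[Z (n + 1) | ℱ n]) ω ≤ ρ * Z n ω) (m : ℕ) :
    ∀ᵐ ω ∂μ, ∃ n ≥ m, Z n ω ≤ η := by
  let killed (n : ℕ) : Ω → ℝ := (survivalSet Z η m n).indicator (Z n)
  have hmeas (n : ℕ) : MeasurableSet (survivalSet Z η m n) :=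
    ℱ.le n _ (measurableSet_survivalSet hadapted η m n)
  have hkilled_nonneg (n : ℕ) : 0 ≤ᵐ[μ] killed n :=
    (hnonneg n).mono fun _ h => Set.indicator_apply_nonneg fun _ => h
  have hdecay : Tendsto (fun n => ∫ ω, killed n ω ∂μ) atTop (nhds 0) := by
    refine tendsto_zero_of_succ_le_mul hρ (m := m)
      (fun n => integral_nonneg_of_ae (hkilled_nonneg n)) fun n hmn => ?_
    simp only [killed, integral_indicator (hmeas _)]
    exact setIntegral_survivalSet_succ_le hmn hadapted hint (hnonneg _) (hdrift n)
  filter_upwards [ae_exists_lt_of_tendsto_integral_zero hη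
    (fun n => (hint (n + m)).indicator (hmeas (n + m))) (fun n => hkilled_nonneg (n + m))
    ((tendsto_add_atTop_iff_nat m).2 hdecay)] with ω ⟨n, hn⟩
  by_contra! habove
  have halive : ω ∈ survivalSet Z η m (n + m) := fun k hk => habove k hk.1
  rw [Set.indicator_of_mem halive] at hn
  exact hn.not_gt (habove _ (Nat.le_add_left m n))

theorem ae_frequently_le_of_condExp_le_affine {a b η : ℝ} (ha : a < 1) (hb : 0 ≤ b)
    (hη : b / (1 - a) < η) (hadapted : Adapted ℱ Z) (hint : ∀ l, Integrable (Z l) μ)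
    (hnonneg : ∀ l, 0 ≤ᵐ[μ] Z l)
    (hdrift : ∀ l, μ[Z (l + 1) | ℱ l] ≤ᵐ[μ] fun ω => a * Z l ω + b) :
    ∀ᵐ ω ∂μ, ∃ᶠ l in atTop, Z l ω ≤ η := by
  have ha' : 0 < 1 - a := sub_pos.2 ha
  have hη0 : 0 < η := (div_nonneg hb ha'.le).trans_lt hη
  have hcontract : a + b / η < 1 := lt_sub_iff_add_lt'.1 ((div_lt_comm₀ ha' hη0).1 hη)
  simp only [frequently_atTop]
  exact ae_all_iff.2 <| ae_exists_ge_le_of_condExp_le_mul hη0 hcontract hadapted hint hnonneg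
    fun n => (hdrift n).mono fun _ h hlt => h.trans (affine_le_mul_of_le hb hη0 hlt.le)

theorem inf_le_near_optimal_region_ae_general {a b : ℝ} (ha : a < 1) (hb : 0 ≤ b)
    (hadapted : Adapted ℱ Z) (hint : ∀ l, Integrable (Z l) μ) (hnonneg : ∀ l, 0 ≤ᵐ[μ] Z l)
    (hdrift : ∀ l, μ[Z (l + 1) | ℱ l] ≤ᵐ[μ] fun ω => a * Z l ω + b) :
    ∀ᵐ ω ∂μ, (∀ η > b / (1 - a), ∃ᶠ l in atTop, Z l ω ≤ η) ∧
      Tendsto (fun l => runMin Z l ω) atTop (nhds (⨅ l, Z l ω)) := by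
  obtain ⟨level, -, hlevel, hlevel_lim⟩ := exists_seq_strictAnti_tendsto (b / (1 - a))
  have hvisits : ∀ᵐ ω ∂μ, ∀ j, ∃ᶠ l in atTop, Z l ω ≤ level j := ae_all_iff.2 fun j =>
    ae_frequently_le_of_condExp_le_affine ha hb (hlevel j) hadapted hint hnonneg hdrift
  filter_upwards [hvisits, ae_all_iff.2 hnonneg] with ω hω hω0
  refine ⟨fun η hη => ?_, tendsto_runMin ⟨0, Set.forall_mem_range.2 hω0⟩⟩
  obtain ⟨j, hj⟩ := (hlevel_lim.eventually_lt_const hη).exists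
  exact (hω j).mono fun _ hl => hl.trans hj.le

end Drift

/-- If a nonnegative adapted integrable process satisfies the one-step drift condition
`E[Z_l ∣ ℱ_{l−1}] ≤ (1−δ)(1−ε) Z_{l−1} + (1−δ)ζ + δM` a.s., then almost surely
`inf_l Z_l ≤ (1/ε)(ζ + δM/(1−δ))`; equivalently the running minimum converges a.s.
to a value at most this threshold. -/
theorem inf_le_near_optimal_region_ae
    {Ω : Type*} {m0 : MeasurableSpace Ω} {μ : Measure Ω} [IsProbabilityMeasure μ]
    (ℱ : Filtration ℕ m0) (Z : ℕ → Ω → ℝ)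
    (hadapted : Adapted ℱ Z)
    (hint : ∀ l, Integrable (Z l) μ)
    (hnonneg : ∀ l ω, 0 ≤ Z l ω)
    (δ ε ζ M : ℝ) (hδ : δ ∈ Set.Ioo (0 : ℝ) 1) (hε : ε ∈ Set.Ioo (0 : ℝ) 1)
    (hζ : 0 ≤ ζ) (hM : 0 ≤ M)
    (hdrift : ∀ l : ℕ, 1 ≤ l →
      μ[Z l | ℱ (l - 1)] ≤ᵐ[μ]
        fun ω => (1 - δ) * (1 - ε) * Z (l - 1) ω + (1 - δ) * ζ + δ * M) :
    ∀ᵐ ω ∂μ, (⨅ l : ℕ, Z l ω) ≤ (1 / ε) * (ζ + δ * M / (1 - δ)) ∧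
      Tendsto (fun l => runMin Z l ω) atTop (nhds (⨅ l : ℕ, Z l ω)) := by
  have hδ' : 0 < 1 - δ := sub_pos.2 hδ.2
  have ha : (1 - δ) * (1 - ε) < 1 := by nlinarith [hδ.1, hε.1]
  have hb : 0 ≤ (1 - δ) * ζ + δ * M :=
    add_nonneg (mul_nonneg hδ'.le hζ) (mul_nonneg hδ.1.le hM)
  have hdrift_succ (l : ℕ) : μ[Z (l + 1) | ℱ l] ≤ᵐ[μ]
      fun ω => (1 - δ) * (1 - ε) * Z l ω + ((1 - δ) * ζ + δ * M) := by
    simpa only [Nat.add_sub_cancel, add_assoc] using hdrift (l + 1) l.succ_pos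
  filter_upwards [inf_le_near_optimal_region_ae_general ha hb hadapted hint
    (fun l => ae_of_all μ (hnonneg l)) hdrift_succ] with ω ⟨hvisits, hrunMin⟩
  refine ⟨le_trans (le_of_forall_gt_imp_ge_of_dense fun η hη => ?_)
    (affine_fixedPoint_le ⟨hδ.1.le, hδ.2⟩ hε.1 hb), hrunMin⟩
  obtain ⟨l, hl⟩ := (hvisits η hη).exists
  exact (ciInf_le ⟨0, Set.forall_mem_range.2 fun k => hnonneg k ω⟩ l).trans hl
end
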